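/- Matrix element representation of the q-deformed Whittaker function over a quantum torus: let A be an associative unital K-algebra containing elements X_{k,i}, T_{k,i} (1 ≤ k ≤ ℓ, 1 ≤ i ≤ k) such that T_{k,i} X_{m,j} = q^{δ_{km}δ_{ij}} X_{m,j} T_{k,i} for all indices, the X's commute pairwise, and the T's commute pairwise. Define f_{n,i} ∈ A for 0 ≤ i ≤ n ≤ ℓ+1 by f_{n,0} := 1, f_{n,n} := z_1 z_2 ⋯ z_n · 1, and f_{n,i} := f_{n−1,i} X_{n−1,i} + z_n f_{n−1,i−1} T_{n−1,i} for 1 ≤ i ≤ n−1. Let V be a left A-module, v_+ ∈ V with T_{k,i} v_+ = v_+ for all k, i, and let φ : V → K be a K-linear functional with φ(X_{k,i} w) = φ(w) for all w ∈ V and all k, i, and φ(v_+) = 1. Then for every dominant p = (p_1 ≥ p_2 ≥ … ≥ p_{ℓ+1}) ∈ ℤ^{ℓ+1} with p_{ℓ+1} ≥ 0 one has φ( f_{ℓ+1,1}^{p_1−p_2} · f_{ℓ+1,2}^{p_2−p_3} · ⋯ · f_{ℓ+1,ℓ}^{p_ℓ−p_{ℓ+1}} · f_{ℓ+1,ℓ+1}^{p_{ℓ+1}}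 · v_+ ) = Ψ̃_z(p), where Ψ̃_z(p) := (∏_{i=1}^{ℓ}(p_i − p_{i+1})_q!) · Ψ_z(p) is the normalized q-deformed gl_{ℓ+1}-Whittaker function. -/

import Mathlib

open Finset

/-- The `q`-factorial `(n)_q! = ∏_{m=1}^{n} (1 - q^m)` (equal to `1` for `n ≤ 0`). -/
noncomputable def qfac {K : Type*} [Field K] (q : K) (n : ℤ) : K :=
  ∏ m ∈ Finset.range n.toNat, (1 - q ^ (m + 1))

/-- A Gelfand–Zetlin pattern: a triangular array `g k i = p_{k+1,i+1}` (0-indexed),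
satisfying the interlacing conditions `p_{k+1,i} ≥ p_{k,i} ≥ p_{k+1,i+1}`. -/
def IsGZ {n : ℕ} (g : ∀ k : Fin (n + 1), Fin ((k : ℕ) + 1) → ℤ) : Prop :=
  ∀ (k : Fin n) (i : Fin ((k : ℕ) + 1)),
    g k.castSucc i ≤ g k.succ i.castSucc ∧ g k.succ i.succ ≤ g k.castSucc i

/-- The weight of a Gelfand–Zetlin pattern in the explicit formula for the
`q`-deformed `gl_{n+1}`-Whittaker function. -/
noncomputable def gzWeight {K : Type*} [Field K] (q : K) {n : ℕ} (z : Fin (n + 1) → K)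
    (g : ∀ k : Fin (n + 1), Fin ((k : ℕ) + 1) → ℤ) : K :=
  z ⟨0, n.succ_pos⟩ ^ g ⟨0, n.succ_pos⟩ ⟨0, Nat.one_pos⟩ *
  (∏ k : Fin n, z k.succ ^ ((∑ i, g k.succ i) - ∑ i, g k.castSucc i)) *
  (∏ k : Fin n, ∏ i : Fin (k : ℕ), qfac q (g k.castSucc i.castSucc - g k.castSucc i.succ)) *
  (∏ k : Fin n, ∏ i : Fin ((k : ℕ) + 1),
      (qfac q (g k.succ i.castSucc - g k.castSucc i) *
       qfac q (g k.castSucc i - g k.succ i.succ)))⁻¹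

/-- The `q`-deformed `gl_{n+1}`-Whittaker function `Ψ_z(p)`: the sum over all
Gelfand–Zetlin patterns with top row `p` of their weights, if `p` is dominant,
and `0` otherwise. -/
noncomputable def whit {K : Type*} [Field K] (q : K) (n : ℕ) (z : Fin (n + 1) → K)
    (p : Fin (n + 1) → ℤ) : K := by
  classical
  exact if (∀ k : Fin n, p k.succ ≤ p k.castSucc) then
    ∑ g ∈ (Finset.Icc (fun (k : Fin (n + 1)) (_ : Fin ((k : ℕ) + 1)) => p (Fin.last n))
        (fun (k : Fin (n + 1)) (_ : Fin ((k : ℕ) + 1)) => p ⟨0, n.succ_pos⟩)).filter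
        (fun g => IsGZ g ∧ g (Fin.last n) = p),
      gzWeight q z g
  else 0

/-- The normalized `q`-deformed Whittaker function
`Ψ̃_z(p) = (∏_{i=1}^{n} (p_i - p_{i+1})_q!) ⬝ Ψ_z(p)`. -/
noncomputable def nwhit {K : Type*} [Field K] (q : K) (n : ℕ) (z : Fin (n + 1) → K)
    (p : Fin (n + 1) → ℤ) : K :=
  (∏ i : Fin n, qfac q (p i.castSucc - p i.succ)) * whit q n z p

/-- The elements `f_{n,i}` of the quantum torus algebra:
`f_{n,0} = 1`, `f_{n,n} = z_1 ⋯ z_n`, and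
`f_{n,i} = f_{n-1,i} X_{n-1,i} + z_n f_{n-1,i-1} T_{n-1,i}` for `1 ≤ i ≤ n-1`. -/
noncomputable def qtorF {K : Type*} [Field K] {A : Type*} [Ring A] [Algebra K A]
    (z : ℕ → K) (X T : ℕ → ℕ → A) : ℕ → ℕ → A
  | _, 0 => 1
  | 0, _ + 1 => 0
  | n + 1, i + 1 =>
      if i + 1 = n + 1 then z (n + 1) • qtorF z X T n i
      else qtorF z X T n (i + 1) * X n (i + 1) + z (n + 1) • (qtorF z X T n i * T n (i + 1))

/-!
The functional `F a = φ (a • v₊)` absorbs every `X` on the left and every `T` on the right. The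
`f_{n+1,i}` at one level commute, and `f_{n+1,i} = f_{n,i} X_{n,i} + z_{n+1} f_{n,i-1} T_{n,i}` is a
sum of two `q`-commuting terms, so the `q`-binomial theorem turns `f_{n+1,i}^a` under `F` into the
Rogers–Szegő polynomial `H_a(f_{n,i}, z_{n+1} f_{n,i-1})`. These live in the commutative algebra
generated by the `f_{n,i}`; expanding their product into monomials, with exponents `r_i - p_{i+1}`
and `p_i - r_i` in the `i`-th factor, gives a sum over the `r` interlacing with `p` of multiples of
`∏ f_{n,i}^(r_i - r_{i+1})`, with the coefficients of the Gelfand–Zetlin branching rule of the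
normalized Whittaker function. Induction on `n` concludes.
-/

section QBinomial

variable {R : Type*} [CommSemiring R]

/-- The Gaussian binomial coefficients, defined by their Pascal rule so that they make sense for
every `q`, roots of unity included. -/
def qBinom (q : R) : ℕ → ℕ → R
  | _, 0 => 1
  | 0, _ + 1 => 0
  | n + 1, k + 1 => qBinom q n k + q ^ (k + 1) * qBinom q n (k + 1)

theorem qBinom_zero_right (q : R) (n : ℕ) : qBinom q n 0 = 1 := by
  cases n <;> rfl

theorem qBinom_eq_zero_of_lt (q : R) {n k : ℕ} (h : n < k) : qBinom q n k = 0 := by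
  induction n generalizing k with
  | zero => obtain ⟨k, rfl⟩ := Nat.exists_eq_succ_of_ne_zero h.ne'; rfl
  | succ n ih =>
    obtain ⟨k, rfl⟩ := Nat.exists_eq_succ_of_ne_zero (Nat.ne_zero_of_lt h)
    rw [qBinom, ih (by omega), ih (by omega), mul_zero, add_zero]

theorem mul_pow_of_qCommute {A : Type*} [Semiring A] [Algebra R A] {q : R} {x y : A}
    (h : y * x = q • (x * y)) (n : ℕ) : y * x ^ n = q ^ n • (x ^ n * y) := by
  induction n with
  | zero => simp
  | succ n ih =>
    rw [pow_succ, ← mul_assoc, ih, smul_mul_assoc, mul_assoc, h, mul_smul_comm, smul_smul,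
      ← pow_succ, mul_assoc]

theorem add_pow_of_qCommute {A : Type*} [Semiring A] [Algebra R A] {q : R} {x y : A}
    (h : y * x = q • (x * y)) (n : ℕ) :
    (x + y) ^ n = ∑ c ∈ range (n + 1), qBinom q n c • (x ^ c * y ^ (n - c)) := by
  induction n with
  | zero => simp [qBinom]
  | succ n ih =>
    have x_mul : x * (x + y) ^ n =
        ∑ c ∈ range (n + 1), qBinom q n c • (x ^ (c + 1) * y ^ (n - c)) := by
      simp only [ih, mul_sum, mul_smul_comm, ← mul_assoc, ← pow_succ']
    have y_mul : y * (x + y) ^ n =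
        ∑ c ∈ range (n + 2), (q ^ c * qBinom q n c) • (x ^ c * y ^ (n + 1 - c)) := by
      rw [ih, mul_sum, sum_range_succ _ (n + 1), qBinom_eq_zero_of_lt q n.lt_succ_self, mul_zero,
        zero_smul, add_zero]
      refine sum_congr rfl fun c hc => ?_
      rw [mul_smul_comm, ← mul_assoc, mul_pow_of_qCommute h, smul_mul_assoc, smul_smul, mul_assoc,
        ← pow_succ', mul_comm, Nat.succ_sub (mem_range_succ_iff.1 hc)]
    rw [pow_succ', add_mul, x_mul, y_mul, sum_range_succ' _ (n + 1), sum_range_succ' _ (n + 1),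
      ← add_assoc, ← sum_add_distrib]
    simp only [qBinom, qBinom_zero_right, add_smul, Nat.add_sub_add_right, pow_zero, one_mul]

/-- The homogeneous Rogers–Szegő polynomial `H_n(x, y) = ∑_c [n choose c]_q x^c y^(n-c)`. -/
def rogersSzego {C : Type*} [CommSemiring C] [Algebra R C] (q : R) (n : ℕ) (x y : C) : C :=
  ∑ c ∈ range (n + 1), qBinom q n c • (x ^ c * y ^ (n - c))

end QBinomial

section QFactorial

variable {K : Type*} [Field K] {q : K}

theorem qfac_natCast_succ (q : K) (n : ℕ) :
    qfac q ((n + 1 : ℕ) : ℤ) = qfac q (n : ℤ) * (1 - q ^ (n + 1)) := by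
  simp only [qfac, Int.toNat_natCast, prod_range_succ]

theorem qfac_ne_zero (hq : ∀ n : ℕ, 1 ≤ n → q ^ n ≠ 1) (n : ℤ) : qfac q n ≠ 0 :=
  prod_ne_zero_iff.2 fun m _ => sub_ne_zero.2 (hq (m + 1) m.succ_pos).symm

theorem qBinom_add_mul_qfac (q : K) (k d : ℕ) :
    qBinom q (k + d) k * (qfac q (k : ℤ) * qfac q (d : ℤ)) = qfac q ((k + d : ℕ) : ℤ) := by
  have qfac_zero : qfac q ((0 : ℕ) : ℤ) = 1 := by simp [qfac]
  induction k generalizing d with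
  | zero => rw [qBinom_zero_right, qfac_zero, zero_add, one_mul, one_mul]
  | succ k ihk =>
    induction d with
    | zero =>
      have := ihk 0
      rw [add_zero] at this ⊢
      rw [qBinom, qBinom_eq_zero_of_lt q k.lt_succ_self, qfac_natCast_succ]
      linear_combination (1 - q ^ (k + 1)) * this
    | succ d ihd =>
      have hk := ihk (d + 1)
      rw [show k + (d + 1) = k + 1 + d by omega, qfac_natCast_succ q d] at hk
      rw [qfac_natCast_succ q k] at ihd
      rw [← add_assoc, qBinom, qfac_natCast_succ, qfac_natCast_succ, qfac_natCast_succ]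
      linear_combination (1 - q ^ (k + 1)) * hk + q ^ (k + 1) * (1 - q ^ (d + 1)) * ihd

theorem qBinom_eq_qfac_div (hq : ∀ n : ℕ, 1 ≤ n → q ^ n ≠ 1) (k d : ℕ) :
    qBinom q (k + d) k = qfac q ((k + d : ℕ) : ℤ) / (qfac q (k : ℤ) * qfac q (d : ℤ)) :=
  eq_div_of_mul_eq (mul_ne_zero (qfac_ne_zero hq _) (qfac_ne_zero hq _))
    (qBinom_add_mul_qfac q k d)

theorem rogersSzego_eq_sum_Icc {C : Type*} [CommSemiring C] [Algebra K C]
    (hq : ∀ n : ℕ, 1 ≤ n → q ^ n ≠ 1) {s t : ℤ} (hst : s ≤ t) (x y : C) :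
    rogersSzego q (t - s).toNat x y =
      ∑ r ∈ Icc s t, (qfac q (t - s) / (qfac q (r - s) * qfac q (t - r))) •
        (x ^ (r - s).toNat * y ^ (t - r).toNat) := by
  obtain ⟨n, rfl⟩ := Int.le.dest hst
  rw [rogersSzego, Int.Icc_eq_finset_map, sum_map,
    show (s + n + 1 - s).toNat = (s + n - s).toNat + 1 by omega]
  refine sum_congr rfl fun c hc => ?_
  obtain ⟨d, rfl⟩ : ∃ d, n = c + d := Nat.exists_eq_add_of_le (by simp at hc; omega)
  have hn : s + ((c + d : ℕ) : ℤ) - s = (c + d : ℕ) := by ring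
  have hd : s + ((c + d : ℕ) : ℤ) - (s + c) = d := by push_cast; ring
  have hc' : s + (c : ℤ) - s = c := by ring
  simp only [Function.Embedding.trans_apply, Nat.castEmbedding_apply, addLeftEmbedding_apply, hn,
    hd, hc', Int.toNat_natCast, Nat.add_sub_cancel_left, qBinom_eq_qfac_div hq]

end QFactorial

section NormalOrdering

variable {R A C M : Type*} [CommSemiring R] [Semiring A] [Algebra R A] [CommSemiring C]
  [Algebra R C] [AddCommMonoid M] [Module R M] {q : R} (ψ : C →ₐ[R] A) (F : A →ₗ[R] M)

theorem map_pow_mul_mul_pow {x t : A} (hx : ∀ b, F (x * b) = F b) (ht : ∀ b, F (b * t) = F b)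
    (c d : ℕ) (b : A) : F (x ^ c * b * t ^ d) = F b := by
  induction d with
  | zero =>
    induction c with
    | zero => simp
    | succ c ih => rw [pow_succ', mul_assoc, mul_assoc, hx, ← mul_assoc, ih]
  | succ d ih => rw [pow_succ, ← mul_assoc, ht, ih]

-- Moving `x` to the left and `t` to the right, where `F` absorbs them, costs only powers of `q`.
theorem map_pow_eq_map_rogersSzego {x t : A} (hxψ : ∀ c, Commute x (ψ c))
    (htψ : ∀ c, Commute t (ψ c)) (htx : t * x = q • (x * t)) (hFx : ∀ b, F (x * b) = F b)
    (hFt : ∀ b, F (b * t) = F b) {l : A} (hxl : Commute x l) (a b c : C) (n : ℕ) :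
    F (l * (ψ a * x + ψ b * t) ^ n * ψ c) = F (l * ψ (rogersSzego q n a b * c)) := by
  have q_commute : ψ b * t * (ψ a * x) = q • (ψ a * x * (ψ b * t)) := by
    rw [(htψ a).mul_mul_mul_comm, (hxψ b).mul_mul_mul_comm, htx, mul_smul_comm, ← map_mul,
      ← map_mul, mul_comm b]
  have normal_order (i j : ℕ) : l * ((ψ a * x) ^ i * (ψ b * t) ^ j) * ψ c =
      x ^ i * (l * ψ (a ^ i * b ^ j * c)) * t ^ j := by
    rw [(hxψ a).symm.mul_pow, ((hxψ a).symm.pow_pow i i).eq, (htψ b).symm.mul_pow]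
    simp only [map_mul, map_pow, mul_assoc]
    rw [((htψ c).pow_left j).eq, ← mul_assoc (x ^ i) l, (hxl.pow_left i).eq, mul_assoc]
  rw [add_pow_of_qCommute q_commute, rogersSzego]
  simp only [mul_sum, sum_mul, map_sum, mul_smul_comm, smul_mul_assoc, map_smul, normal_order,
    map_pow_mul_mul_pow F hFx hFt]

theorem map_list_prod_eq_map_prod_rogersSzego {x t : ℕ → A} {m : ℕ}
    (hxψ : ∀ k < m, ∀ c, Commute (x k) (ψ c)) (htψ : ∀ k < m, ∀ c, Commute (t k) (ψ c))
    (hxx : ∀ i < m, ∀ j < i, Commute (x i) (x j)) (hxt : ∀ i < m, ∀ j < i, Commute (x i) (t j))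
    (htx : ∀ k < m, t k * x k = q • (x k * t k)) (hFx : ∀ k < m, ∀ b, F (x k * b) = F b)
    (hFt : ∀ k < m, ∀ b, F (b * t k) = F b) (a b : ℕ → C) (e : ℕ → ℕ) (c : C) :
    F (((List.range m).map fun k => (ψ (a k) * x k + ψ (b k) * t k) ^ e k).prod * ψ c) =
      F (ψ ((∏ k ∈ range m, rogersSzego q (e k) (a k) (b k)) * c)) := by
  induction m generalizing c with
  | zero => simp
  | succ m ih =>
    rw [Nat.forall_lt_succ_right] at hxψ htψ hxx hxt htx hFx hFt
    have hxl : Commute (x m)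
        ((List.range m).map fun k => (ψ (a k) * x k + ψ (b k) * t k) ^ e k).prod := by
      refine Commute.list_prod_right _ _ fun y hy => ?_
      obtain ⟨k, hk, rfl⟩ := List.mem_map.1 hy
      have hkm : k < m := List.mem_range.1 hk
      exact (((hxψ.2 _).mul_right (hxx.2 k hkm)).add_right
        ((hxψ.2 _).mul_right (hxt.2 k hkm))).pow_right _
    rw [List.prod_range_succ, map_pow_eq_map_rogersSzego ψ F hxψ.2 htψ.2 htx.2 hFx.2 hFt.2 hxl,
      ih hxψ.1 htψ.1 hxx.1 hxt.1 htx.1 hFx.1 hFt.1, prod_range_succ, mul_assoc]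

end NormalOrdering

section CommutingFamily

variable {R A ι : Type*} [CommSemiring R] [Semiring A] [Algebra R A]

open scoped IsMulCommutative in
theorem exists_mvPolynomial_algHom_of_commute {f : ι → A} (hf : ∀ i j, Commute (f i) (f j)) :
    ∃ ψ : MvPolynomial ι R →ₐ[R] A, ∀ i, ψ (MvPolynomial.X i) = f i := by
  have : IsMulCommutative (Algebra.adjoin R (Set.range f)) :=
    Algebra.isMulCommutative_adjoin R (Set.forall_mem_range.2 fun i =>
      Set.forall_mem_range.2 (hf i))
  refine ⟨(Algebra.adjoin R (Set.range f)).val.comp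
    (MvPolynomial.aeval (S₁ := Algebra.adjoin R (Set.range f))
      fun i => ⟨f i, Algebra.subset_adjoin ⟨i, rfl⟩⟩), fun i => ?_⟩
  rw [AlgHom.comp_apply, MvPolynomial.aeval_X, Subalgebra.coe_val]

theorem commute_mvPolynomial_algHom {ψ : MvPolynomial ι R →ₐ[R] A} {y : A}
    (hy : ∀ i, Commute y (ψ (MvPolynomial.X i))) (P : MvPolynomial ι R) : Commute y (ψ P) := by
  induction P using MvPolynomial.induction_on with
  | C r => rw [← MvPolynomial.algebraMap_eq, AlgHom.commutes]; exact (Algebra.commutes r y).symm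
  | add P Q hP hQ => rw [map_add]; exact hP.add_right hQ
  | mul_X P i hP => rw [map_mul]; exact hP.mul_right (hy i)

end CommutingFamily

section GelfandZetlin

/-- Triangular integer arrays with rows of lengths `1, …, n + 1`, the carrier of the Gelfand–Zetlin
patterns of `gl_{n+1}`. -/
abbrev TriArray (n : ℕ) : Type := ∀ k : Fin (n + 1), Fin ((k : ℕ) + 1) → ℤ

theorem isGZ_succ_iff {n : ℕ} {g : TriArray (n + 1)} {r : Fin (n + 1) → ℤ}
    {p : Fin (n + 2) → ℤ} (hr : g (Fin.last n).castSucc = r) (hp : g (Fin.last (n + 1)) = p) :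
    IsGZ g ↔ IsGZ (n := n) (fun k => g k.castSucc) ∧
      (∀ i, p i.succ ≤ r i) ∧ ∀ i, r i ≤ p i.castSucc := by
  subst hr hp
  rw [← forall_and]
  exact Fin.forall_fin_succ'.trans (and_congr Iff.rfl (forall_congr' fun _ => and_comm))

theorem IsGZ.antitone_last {n : ℕ} {g : TriArray n} (h : IsGZ g) : Antitone (g (Fin.last n)) := by
  cases n with
  | zero => exact fun a b _ => (congrArg _ (Subsingleton.elim (α := Fin 1) a b)).ge
  | succ n =>
    exact Fin.antitone_iff_succ_le.2 fun i => (h (Fin.last n) i).2.trans (h (Fin.last n) i).1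

theorem IsGZ.mem_Icc {n : ℕ} {g : TriArray n} (h : IsGZ g) (k : Fin (n + 1))
    (i : Fin ((k : ℕ) + 1)) :
    g k i ∈ Set.Icc (g (Fin.last n) (Fin.last n)) (g (Fin.last n) ⟨0, n.succ_pos⟩) := by
  induction n with
  | zero =>
    obtain rfl : k = Fin.last 0 := Subsingleton.elim (α := Fin 1) _ _
    exact ⟨h.antitone_last (Fin.le_last i), h.antitone_last (Fin.zero_le i)⟩
  | succ n ih =>
    cases k using Fin.lastCases with
    | last => exact ⟨h.antitone_last (Fin.le_last i), h.antitone_last (Fin.zero_le i)⟩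
    | cast k =>
      obtain ⟨hlow, hle, hge⟩ := (isGZ_succ_iff rfl rfl).1 h
      have hk := ih hlow k i
      exact ⟨(hle (Fin.last n)).trans hk.1, hk.2.trans (hge ⟨0, n.succ_pos⟩)⟩

open Classical in
/-- The finite set of Gelfand–Zetlin patterns with top row `p`. It is cut out of the same box as in
`whit`; by `mem_gzPatterns` the box is no restriction. -/
noncomputable def gzPatterns {n : ℕ} (p : Fin (n + 1) → ℤ) : Finset (TriArray n) :=
  (Icc (fun _ _ => p (Fin.last n)) (fun _ _ => p ⟨0, n.succ_pos⟩)).filter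
    (fun g => IsGZ g ∧ g (Fin.last n) = p)

theorem mem_gzPatterns {n : ℕ} {p : Fin (n + 1) → ℤ} {g : TriArray n} :
    g ∈ gzPatterns p ↔ IsGZ g ∧ g (Fin.last n) = p := by
  classical
  rw [gzPatterns, mem_filter, and_iff_right_iff_imp, Finset.mem_Icc]
  rintro ⟨h, rfl⟩
  exact ⟨fun k i => (h.mem_Icc k i).1, fun k i => (h.mem_Icc k i).2⟩

theorem sum_gzPatterns_succ {M : Type*} [AddCommMonoid M] {n : ℕ} (p : Fin (n + 2) → ℤ)
    (w : TriArray (n + 1) → M) :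
    ∑ g ∈ gzPatterns p, w g =
      ∑ r ∈ Icc (fun i : Fin (n + 1) => p i.succ) (fun i => p i.castSucc),
        ∑ g ∈ gzPatterns r, w (Fin.snoc (α := fun k => Fin ((k : ℕ) + 1) → ℤ) g p) := by
  have snoc_castSucc (g : TriArray n) (k : Fin (n + 1)) :
      Fin.snoc (α := fun k : Fin (n + 2) => Fin ((k : ℕ) + 1) → ℤ) g p k.castSucc = g k :=
    Fin.snoc_castSucc ..
  have snoc_last (g : TriArray n) :
      Fin.snoc (α := fun k : Fin (n + 2) => Fin ((k : ℕ) + 1) → ℤ) g p (Fin.last (n + 1)) = p :=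
    Fin.snoc_last ..
  have snoc_init {g : TriArray (n + 1)} (h : g (Fin.last (n + 1)) = p) :
      Fin.snoc (α := fun k => Fin ((k : ℕ) + 1) → ℤ) (fun k => g k.castSucc) p = g := by
    rw [← h]
    exact Fin.snoc_init_self (α := fun k : Fin (n + 2) => Fin ((k : ℕ) + 1) → ℤ) g
  rw [sum_sigma']
  refine sum_nbij' (fun g => ⟨g (Fin.last n).castSucc, fun k => g k.castSucc⟩)
    (fun rg => Fin.snoc (α := fun k => Fin ((k : ℕ) + 1) → ℤ) rg.2 p) ?_ ?_ ?_ ?_ ?_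
  · intro g hg
    obtain ⟨hGZ, htop⟩ := mem_gzPatterns.1 hg
    obtain ⟨hlow, hle, hge⟩ := (isGZ_succ_iff rfl htop).1 hGZ
    exact mem_sigma.2 ⟨Finset.mem_Icc.2 ⟨hle, hge⟩, mem_gzPatterns.2 ⟨hlow, rfl⟩⟩
  · rintro ⟨r, g⟩ hrg
    obtain ⟨hr, hg⟩ := mem_sigma.1 hrg
    obtain ⟨hGZ, htop⟩ := mem_gzPatterns.1 hg
    refine mem_gzPatterns.2
      ⟨(isGZ_succ_iff ((snoc_castSucc g _).trans htop) (snoc_last g)).2 ⟨?_, Finset.mem_Icc.1 hr⟩,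
        snoc_last g⟩
    simpa only [snoc_castSucc] using hGZ
  · exact fun g hg => snoc_init (mem_gzPatterns.1 hg).2
  · rintro ⟨r, g⟩ hrg
    obtain ⟨-, rfl⟩ : IsGZ g ∧ g (Fin.last n) = r := mem_gzPatterns.1 (mem_sigma.1 hrg).2
    simp only [snoc_castSucc]
  · exact fun g hg => by rw [snoc_init (mem_gzPatterns.1 hg).2]

end GelfandZetlin

section Whittaker

variable {K : Type*} [Field K] (q : K) {n : ℕ}

theorem whit_eq_sum_gzPatterns (z : Fin (n + 1) → K) {p : Fin (n + 1) → ℤ}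
    (hp : ∀ k : Fin n, p k.succ ≤ p k.castSucc) :
    whit q n z p = ∑ g ∈ gzPatterns p, gzWeight q z g :=
  if_pos hp

theorem gzWeight_succ (z : Fin (n + 2) → K) {g : TriArray (n + 1)} {r : Fin (n + 1) → ℤ}
    {p : Fin (n + 2) → ℤ} (hr : g (Fin.last n).castSucc = r) (hp : g (Fin.last (n + 1)) = p) :
    gzWeight q z g = z (Fin.last (n + 1)) ^ ((∑ i, p i) - ∑ i, r i) *
      (∏ i : Fin n, qfac q (r i.castSucc - r i.succ)) *
      (∏ i, (qfac q (p i.castSucc - r i) * qfac q (r i - p i.succ)))⁻¹ *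
      gzWeight q (n := n) (fun k => z k.castSucc) (fun k => g k.castSucc) := by
  subst hr hp
  unfold gzWeight
  rw [Fin.prod_univ_castSucc, Fin.prod_univ_castSucc (n := n)
      (f := fun k => ∏ i : Fin (k : ℕ), qfac q (g k.castSucc i.castSucc - g k.castSucc i.succ)),
    Fin.prod_univ_castSucc (n := n) (f := fun k => ∏ i : Fin ((k : ℕ) + 1),
      (qfac q (g k.succ i.castSucc - g k.castSucc i) *
       qfac q (g k.castSucc i - g k.succ i.succ))), mul_inv]
  simp only [Fin.val_castSucc, Fin.val_last, Fin.succ_last, Fin.succ_castSucc]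
  have regroup (a b₁ b₂ c₁ c₂ d₁ d₂ : K) : a * (b₁ * b₂) * (c₁ * c₂) * (d₁ * d₂) =
      b₂ * c₂ * d₂ * (a * b₁ * c₁ * d₁) := by ring
  exact regroup ..

theorem nwhit_zero (z : Fin 1 → K) (p : Fin 1 → ℤ) : nwhit q 0 z p = z 0 ^ p 0 := by
  have patterns_eq : gzPatterns p = {fun _ _ => p 0} := by
    refine eq_singleton_iff_unique_mem.2
      ⟨mem_gzPatterns.2 ⟨fun k => k.elim0, funext fun i => ?_⟩, fun g hg => funext₂ fun k i => ?_⟩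
    · exact congrArg p (Subsingleton.elim (α := Fin 1) _ _)
    · obtain rfl : k = Fin.last 0 := Subsingleton.elim (α := Fin 1) _ _
      rw [(mem_gzPatterns.1 hg).2]
      exact congrArg p (Subsingleton.elim (α := Fin 1) _ _)
  rw [nwhit, whit_eq_sum_gzPatterns q z fun k => k.elim0, patterns_eq, sum_singleton, gzWeight]
  simp

theorem nwhit_succ (z : Fin (n + 2) → K) {p : Fin (n + 2) → ℤ}
    (hp : ∀ k : Fin (n + 1), p k.succ ≤ p k.castSucc) :
    nwhit q (n + 1) z p =
      ∑ r ∈ Icc (fun i : Fin (n + 1) => p i.succ) (fun i => p i.castSucc),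
        (∏ i, qfac q (p i.castSucc - p i.succ) /
          (qfac q (r i - p i.succ) * qfac q (p i.castSucc - r i))) *
        z (Fin.last (n + 1)) ^ ((∑ i, p i) - ∑ i, r i) *
        nwhit q n (fun k => z k.castSucc) r := by
  rw [nwhit, whit_eq_sum_gzPatterns q z hp, sum_gzPatterns_succ, mul_sum]
  refine sum_congr rfl fun r hr => ?_
  obtain ⟨hle, hge⟩ := Finset.mem_Icc.1 hr
  have r_dominant (k : Fin n) : r k.succ ≤ r k.castSucc := (hge k.succ).trans (hle k.castSucc)
  rw [nwhit, whit_eq_sum_gzPatterns q _ r_dominant, prod_div_distrib, mul_sum, mul_sum, mul_sum]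
  refine sum_congr rfl fun g hg => ?_
  rw [gzWeight_succ q z ((Fin.snoc_castSucc ..).trans (mem_gzPatterns.1 hg).2) (Fin.snoc_last ..)]
  simp only [Fin.snoc_castSucc, mul_comm (qfac q (p _ - r _))]
  ring

end Whittaker

section Torus

variable {K A : Type*} [Field K] [Ring A] [Algebra K A] {q : K} {ℓ : ℕ} (z : ℕ → K)
  {X T : ℕ → ℕ → A}

theorem qtorF_zero_right (X T : ℕ → ℕ → A) (n : ℕ) : qtorF z X T n 0 = 1 := by
  cases n <;> rfl

theorem qtorF_succ_self (X T : ℕ → ℕ → A) (n : ℕ) :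
    qtorF z X T (n + 1) (n + 1) = z (n + 1) • qtorF z X T n n :=
  if_pos rfl

theorem qtorF_succ_succ (X T : ℕ → ℕ → A) {n i : ℕ} (h : i ≠ n) :
    qtorF z X T (n + 1) (i + 1) =
      qtorF z X T n (i + 1) * X n (i + 1) + z (n + 1) • (qtorF z X T n i * T n (i + 1)) :=
  if_neg (by omega)

theorem qtorF_eq_zero_of_lt (X T : ℕ → ℕ → A) {n i : ℕ} (h : n < i) : qtorF z X T n i = 0 := by
  induction n generalizing i with
  | zero => obtain ⟨i, rfl⟩ := Nat.exists_eq_succ_of_ne_zero h.ne'; rfl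
  | succ n ih =>
    obtain ⟨i, rfl⟩ := Nat.exists_eq_succ_of_ne_zero (Nat.ne_zero_of_lt h)
    rw [qtorF_succ_succ z X T (by omega), ih (by omega), ih (by omega), zero_mul, zero_mul,
      smul_zero, add_zero]

theorem commute_qtorF_succ {y : A} {n i : ℕ} (hf : ∀ j, Commute y (qtorF z X T n j))
    (hX : 1 ≤ i → i ≤ n → Commute y (X n i)) (hT : 1 ≤ i → i ≤ n → Commute y (T n i)) :
    Commute y (qtorF z X T (n + 1) i) := by
  cases i with
  | zero => rw [qtorF_zero_right]; exact Commute.one_right y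
  | succ i =>
    obtain hi | rfl | hi := lt_trichotomy i n
    · rw [qtorF_succ_succ z X T hi.ne]
      exact ((hf _).mul_right (hX (by omega) hi)).add_right
        (((hf _).mul_right (hT (by omega) hi)).smul_right _)
    · rw [qtorF_succ_self]
      exact (hf _).smul_right _
    · rw [qtorF_eq_zero_of_lt z X T (by omega)]
      exact Commute.zero_right y

/-- The index set `1 ≤ i ≤ k ≤ ℓ` of the generators `X k i`, `T k i` of the quantum torus. -/
def InTriangle (ℓ k i : ℕ) : Prop := 1 ≤ i ∧ i ≤ k ∧ k ≤ ℓ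

/-- The quantum torus relations among `X k i` and `T k i` with indices in the triangle; the values
outside it are unconstrained. -/
structure IsQuantumTorus (q : K) (ℓ : ℕ) (X T : ℕ → ℕ → A) : Prop where
  commute_X {k i m j : ℕ} : InTriangle ℓ k i → InTriangle ℓ m j → Commute (X k i) (X m j)
  commute_T {k i m j : ℕ} : InTriangle ℓ k i → InTriangle ℓ m j → Commute (T k i) (T m j)
  commute_T_X {k i m j : ℕ} : InTriangle ℓ k i → InTriangle ℓ m j → (k, i) ≠ (m, j) →
    Commute (T k i) (X m j)
  T_mul_X {k i : ℕ} : InTriangle ℓ k i → T k i * X k i = q • (X k i * T k i)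

namespace IsQuantumTorus

variable (h : IsQuantumTorus q ℓ X T)
include h

theorem commute_generators_qtorF {k i : ℕ} (hki : InTriangle ℓ k i) {n : ℕ} (hn : n ≤ k) (j : ℕ) :
    Commute (X k i) (qtorF z X T n j) ∧ Commute (T k i) (qtorF z X T n j) := by
  induction n generalizing j with
  | zero =>
    cases j with
    | zero => exact ⟨Commute.one_right _, Commute.one_right _⟩
    | succ j => exact ⟨Commute.zero_right _, Commute.zero_right _⟩
  | succ n ih =>
    have hnj (h1 : 1 ≤ j) (h2 : j ≤ n) : InTriangle ℓ n j :=
      ⟨h1, h2, (Nat.le_of_lt hn).trans hki.2.2⟩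
    have ne : (k, i) ≠ (n, j) := fun e => (Nat.ne_of_gt hn) (congrArg Prod.fst e)
    exact ⟨commute_qtorF_succ z (fun j => (ih (Nat.le_of_lt hn) j).1)
        (fun h1 h2 => h.commute_X hki (hnj h1 h2))
        (fun h1 h2 => (h.commute_T_X (hnj h1 h2) hki ne.symm).symm),
      commute_qtorF_succ z (fun j => (ih (Nat.le_of_lt hn) j).2)
        (fun h1 h2 => h.commute_T_X hki (hnj h1 h2) ne)
        (fun h1 h2 => h.commute_T hki (hnj h1 h2))⟩

theorem commute_generators_qtorF_succ {n i j : ℕ} (hni : InTriangle ℓ n i) (hij : i ≠ j) :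
    Commute (X n i) (qtorF z X T (n + 1) j) ∧ Commute (T n i) (qtorF z X T (n + 1) j) := by
  have hnj (h1 : 1 ≤ j) (h2 : j ≤ n) : InTriangle ℓ n j := ⟨h1, h2, hni.2.2⟩
  have ne : (n, i) ≠ (n, j) := fun e => hij (congrArg Prod.snd e)
  have hf := h.commute_generators_qtorF z hni le_rfl
  exact ⟨commute_qtorF_succ z (fun j => (hf j).1) (fun h1 h2 => h.commute_X hni (hnj h1 h2))
      (fun h1 h2 => (h.commute_T_X (hnj h1 h2) hni ne.symm).symm),
    commute_qtorF_succ z (fun j => (hf j).2) (fun h1 h2 => h.commute_T_X hni (hnj h1 h2) ne)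
      (fun h1 h2 => h.commute_T hni (hnj h1 h2))⟩

theorem commute_qtorF {n : ℕ} (hn : n ≤ ℓ + 1) (i j : ℕ) :
    Commute (qtorF z X T n i) (qtorF z X T n j) := by
  induction n generalizing i j with
  | zero =>
    cases j with
    | zero => exact Commute.one_right _
    | succ j => exact Commute.zero_right _
  | succ n ih =>
    have hn' : n ≤ ℓ := Nat.le_of_succ_le_succ hn
    have commute_level_succ (i j : ℕ) : Commute (qtorF z X T n i) (qtorF z X T (n + 1) j) :=
      commute_qtorF_succ z (ih (by omega) i)
        (fun h1 h2 => (h.commute_generators_qtorF z ⟨h1, h2, hn'⟩ le_rfl i).1.symm)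
        (fun h1 h2 => (h.commute_generators_qtorF z ⟨h1, h2, hn'⟩ le_rfl i).2.symm)
    obtain rfl | hij := eq_or_ne i j
    · exact Commute.refl _
    · exact commute_qtorF_succ z (fun k => (commute_level_succ k i).symm)
        (fun h1 h2 => (h.commute_generators_qtorF_succ z ⟨h1, h2, hn'⟩ hij.symm).1.symm)
        (fun h1 h2 => (h.commute_generators_qtorF_succ z ⟨h1, h2, hn'⟩ hij.symm).2.symm)

end IsQuantumTorus

/-- A functional playing the role of the vacuum expectation value `a ↦ ⟨v₋| a |v₊⟩`: it is
normalized and absorbs every `X k i` on the left and every `T k i` on the right. -/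
structure IsVacuumFunctional (ℓ : ℕ) (X T : ℕ → ℕ → A) (F : A →ₗ[K] K) : Prop where
  X_mul {k i : ℕ} : InTriangle ℓ k i → ∀ a, F (X k i * a) = F a
  mul_T {k i : ℕ} : InTriangle ℓ k i → ∀ a, F (a * T k i) = F a
  map_one : F 1 = 1

theorem vacuum_prod_qtorF_succ (h : IsQuantumTorus q ℓ X T) {F : A →ₗ[K] K}
    (hF : IsVacuumFunctional ℓ X T F) {n : ℕ} (hn : n ≤ ℓ) {ψ : MvPolynomial ℕ K →ₐ[K] A}
    (hψ : ∀ i, ψ (MvPolynomial.X i) = qtorF z X T n i) (e : ℕ → ℕ) :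
    F ((List.range (n + 1)).map fun k => qtorF z X T (n + 1) (k + 1) ^ e k).prod =
      F (ψ ((∏ k ∈ range n, rogersSzego q (e k) (MvPolynomial.X (k + 1))
        (z (n + 1) • MvPolynomial.X k)) * (z (n + 1) • MvPolynomial.X n) ^ e n)) := by
  have mem {k : ℕ} (hk : k < n) : InTriangle ℓ n (k + 1) := ⟨k.succ_pos, hk, hn⟩
  have f_eq (k : ℕ) (hk : k ∈ List.range n) : qtorF z X T (n + 1) (k + 1) ^ e k =
      (ψ (MvPolynomial.X (k + 1)) * X n (k + 1) +
        ψ (z (n + 1) • MvPolynomial.X k) * T n (k + 1)) ^ e k := by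
    rw [qtorF_succ_succ z X T (List.mem_range.1 hk).ne, map_smul, hψ, hψ, smul_mul_assoc]
  have last_eq : qtorF z X T (n + 1) (n + 1) ^ e n =
      ψ ((z (n + 1) • MvPolynomial.X n) ^ e n) := by
    rw [qtorF_succ_self, map_pow, map_smul, hψ]
  rw [List.prod_range_succ, last_eq, List.map_congr_left f_eq]
  refine map_list_prod_eq_map_prod_rogersSzego ψ F (x := fun k => X n (k + 1))
    (t := fun k => T n (k + 1)) ?_ ?_ ?_ ?_ ?_ ?_ ?_ _ _ _ _
  · exact fun k hk => commute_mvPolynomial_algHom fun i => by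
      rw [hψ]; exact (h.commute_generators_qtorF z (mem hk) le_rfl i).1
  · exact fun k hk => commute_mvPolynomial_algHom fun i => by
      rw [hψ]; exact (h.commute_generators_qtorF z (mem hk) le_rfl i).2
  · exact fun i hi j hj => h.commute_X (mem hi) (mem (hj.trans hi))
  · exact fun i hi j hj => (h.commute_T_X (mem (hj.trans hi)) (mem hi) (by simp; omega)).symm
  · exact fun k hk => h.T_mul_X (mem hk)
  · exact fun k hk => hF.X_mul (mem hk)
  · exact fun k hk => hF.mul_T (mem hk)

end Torus

section Branching

/-- A weight `r` of `gl_m`, indexed from `0` and continued by zeros. -/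
def extendZero {m : ℕ} (r : Fin m → ℤ) (k : ℕ) : ℤ := if h : k < m then r ⟨k, h⟩ else 0

/-- The coefficient `r_k - r_{k+1}` of a weight `r` of `gl_m` on its `k`-th fundamental weight
(indexed from `0`, with `r_m = 0`), truncated at `0` as it serves as an exponent. -/
def fundCoeff {m : ℕ} (r : Fin m → ℤ) (k : ℕ) : ℕ :=
  (extendZero r k - extendZero r (k + 1)).toNat

theorem extendZero_val {m : ℕ} (r : Fin m → ℤ) (i : Fin m) : extendZero r i = r i :=
  dif_pos i.2

theorem extendZero_self {m : ℕ} (r : Fin m → ℤ) : extendZero r m = 0 :=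
  dif_neg (lt_irrefl m)

theorem extendZero_val_succ {m : ℕ} (r : Fin (m + 1) → ℤ) (i : Fin m) :
    extendZero r (i + 1) = r i.succ :=
  extendZero_val r i.succ

theorem extendZero_castSucc {m : ℕ} (r : Fin (m + 1) → ℤ) (i : Fin m) :
    extendZero r i = r i.castSucc :=
  extendZero_val r i.castSucc

theorem sum_range_extendZero {m : ℕ} (r : Fin m → ℤ) :
    ∑ k ∈ range m, extendZero r k = ∑ i, r i := by
  rw [sum_range]
  exact sum_congr rfl fun i _ => extendZero_val r i

theorem extendZero_interlacing {m : ℕ} {p : Fin (m + 1) → ℤ} {r : Fin m → ℤ}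
    (hr : r ∈ Icc (fun i => p i.succ) (fun i => p i.castSucc)) (hp0 : 0 ≤ p (Fin.last m)) :
    (∀ k < m, extendZero p (k + 1) ≤ extendZero r k) ∧
      ∀ k < m + 1, extendZero r k ≤ extendZero p k := by
  obtain ⟨hpr, hrp⟩ := mem_Icc.1 hr
  refine ⟨fun k hk => ?_, Nat.forall_lt_succ_right.2 ⟨fun k hk => ?_, ?_⟩⟩
  · exact (extendZero_val_succ p ⟨k, hk⟩).trans_le
      ((hpr ⟨k, hk⟩).trans_eq (extendZero_val r ⟨k, hk⟩).symm)
  · exact (extendZero_val r ⟨k, hk⟩).trans_le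
      ((hrp ⟨k, hk⟩).trans_eq (extendZero_castSucc p ⟨k, hk⟩).symm)
  · rw [extendZero_self]
    exact hp0.trans_eq (extendZero_val p (Fin.last m)).symm

variable {K C : Type*} [Field K] [CommSemiring C] [Algebra K C] {q : K}

theorem prod_interlacing_pow (y : ℕ → C) (ζ : K) {P R : ℕ → ℤ} {m : ℕ}
    (hPR : ∀ k < m, P (k + 1) ≤ R k) (hRP : ∀ k < m + 1, R k ≤ P k) :
    (∏ k ∈ range m, y (k + 1) ^ (R k - P (k + 1)).toNat * (ζ • y k) ^ (P k - R k).toNat) *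
        (ζ • y m) ^ (P m - R m).toNat =
      ζ ^ (∑ k ∈ range (m + 1), (P k - R k)) •
        (y 0 ^ (P 0 - R 0).toNat * ∏ k ∈ range m, y (k + 1) ^ (R k - R (k + 1)).toNat) := by
  have scalar : ∏ k ∈ range (m + 1), ζ ^ (P k - R k).toNat =
      ζ ^ (∑ k ∈ range (m + 1), (P k - R k)) := by
    rw [prod_pow_eq_pow_sum, ← zpow_natCast, Nat.cast_sum]
    exact congrArg _ (sum_congr rfl fun k hk =>
      Int.toNat_of_nonneg (sub_nonneg.2 (hRP k (mem_range.1 hk))))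
  have telescope : ∀ k ∈ range m, y (k + 1) ^ (R k - R (k + 1)).toNat =
      y (k + 1) ^ (R k - P (k + 1)).toNat * y (k + 1) ^ (P (k + 1) - R (k + 1)).toNat := by
    intro k hk
    have hk := mem_range.1 hk
    have := hPR k hk
    have := hRP (k + 1) (by omega)
    rw [← pow_add]
    congr 1
    omega
  rw [prod_mul_distrib, mul_assoc, ← prod_range_succ (fun k => (ζ • y k) ^ (P k - R k).toNat),
    prod_congr rfl telescope, prod_mul_distrib, ← scalar]
  simp only [smul_pow, prod_smul]
  rw [prod_range_succ' (fun k => y k ^ _), mul_smul_comm]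
  congr 1
  ring

theorem prod_rogersSzego_eq_sum_interlacing (hq : ∀ n : ℕ, 1 ≤ n → q ^ n ≠ 1) (y : ℕ → C) (ζ : K)
    {n : ℕ} {p : Fin (n + 2) → ℤ} (hp : ∀ i : Fin (n + 1), p i.succ ≤ p i.castSucc)
    (hp0 : 0 ≤ p (Fin.last (n + 1))) :
    (∏ k ∈ range (n + 1), rogersSzego q (fundCoeff p k) (y (k + 1)) (ζ • y k)) *
        (ζ • y (n + 1)) ^ fundCoeff p (n + 1) =
      ∑ r ∈ Icc (fun i : Fin (n + 1) => p i.succ) (fun i => p i.castSucc),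
        ((∏ i, qfac q (p i.castSucc - p i.succ) /
            (qfac q (r i - p i.succ) * qfac q (p i.castSucc - r i))) *
          ζ ^ ((∑ i, p i) - ∑ i, r i)) •
          (y 0 ^ (extendZero p 0 - extendZero r 0).toNat *
            ∏ k ∈ range (n + 1), y (k + 1) ^ fundCoeff r k) := by
  have factor_eq (i : Fin (n + 1)) :
      rogersSzego q (fundCoeff p i) (y (i + 1)) (ζ • y i) =
        ∑ s ∈ Icc (p i.succ) (p i.castSucc), (qfac q (p i.castSucc - p i.succ) /
            (qfac q (s - p i.succ) * qfac q (p i.castSucc - s))) •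
          (y (i + 1) ^ (s - p i.succ).toNat * (ζ • y i) ^ (p i.castSucc - s).toNat) := by
    rw [← rogersSzego_eq_sum_Icc hq (hp i), fundCoeff, extendZero_val_succ, extendZero_castSucc]
  rw [prod_range]
  simp only [factor_eq]
  rw [prod_univ_sum, sum_mul, ← Pi.Icc_eq]
  refine sum_congr rfl fun r hr => ?_
  obtain ⟨lower, upper⟩ := extendZero_interlacing hr hp0
  have weight : ∑ k ∈ range (n + 2), (extendZero p k - extendZero r k) = ∑ i, p i - ∑ i, r i := by
    rw [sum_sub_distrib, sum_range_extendZero, sum_range_succ, sum_range_extendZero,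
      extendZero_self, add_zero]
  have last_exponent : extendZero p (n + 1) - extendZero p (n + 2) =
      extendZero p (n + 1) - extendZero r (n + 1) := by
    rw [extendZero_self, extendZero_self]
  rw [prod_smul, smul_mul_assoc, mul_smul, ← weight]
  simp only [fundCoeff]
  rw [← prod_interlacing_pow y ζ lower upper, prod_range, last_exponent]
  simp only [extendZero_val, extendZero_val_succ, extendZero_castSucc]

end Branching

section VacuumExpectation

variable {K A : Type*} [Field K] [Ring A] [Algebra K A] {q : K} {ℓ : ℕ}

theorem vacuum_prod_qtorF_eq_nwhit (hq : ∀ n : ℕ, 1 ≤ n → q ^ n ≠ 1) (z : ℕ → K)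
    {X T : ℕ → ℕ → A} (h : IsQuantumTorus q ℓ X T) {F : A →ₗ[K] K}
    (hF : IsVacuumFunctional ℓ X T F) {n : ℕ} (hn : n ≤ ℓ) {p : Fin (n + 1) → ℤ}
    (hp : ∀ k : Fin n, p k.succ ≤ p k.castSucc) (hp0 : 0 ≤ p (Fin.last n)) :
    F ((List.range (n + 1)).map fun k => qtorF z X T (n + 1) (k + 1) ^ fundCoeff p k).prod =
      nwhit q n (fun i => z (i + 1)) p := by
  induction n with
  | zero =>
    have exponent : fundCoeff p 0 = (p 0).toNat := by simp [fundCoeff, extendZero]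
    obtain ⟨a, ha⟩ := Int.eq_ofNat_of_zero_le (show 0 ≤ p 0 from hp0)
    simp [nwhit_zero, exponent, qtorF_succ_self, qtorF_zero_right, smul_pow, hF.map_one, ha]
  | succ n ih =>
    obtain ⟨ψ, hψ⟩ := exists_mvPolynomial_algHom_of_commute (R := K)
      (h.commute_qtorF z (show n + 1 ≤ ℓ + 1 by omega))
    rw [vacuum_prod_qtorF_succ z h hF hn hψ,
      prod_rogersSzego_eq_sum_interlacing hq MvPolynomial.X (z (n + 2)) hp hp0, nwhit_succ q _ hp,
      map_sum, map_sum]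
    refine sum_congr rfl fun r hr => ?_
    obtain ⟨hpr, hrp⟩ := mem_Icc.1 hr
    have map_monomial (a : ℕ) :
        ψ (MvPolynomial.X 0 ^ a * ∏ k ∈ range (n + 1), MvPolynomial.X (k + 1) ^ fundCoeff r k) =
          ((List.range (n + 1)).map
            fun k => qtorF z X T (n + 1) (k + 1) ^ fundCoeff r k).prod := by
      rw [map_mul, map_pow, hψ, qtorF_zero_right, one_pow, one_mul,
        ← List.toFinset_range, List.prod_toFinset _ List.nodup_range, map_list_prod, List.map_map]
      simp only [Function.comp_def, map_pow, hψ]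
    rw [map_smul, map_smul, map_monomial, smul_eq_mul, ih (by omega)
      (fun k => (hrp k.succ).trans (hpr k.castSucc)) (hp0.trans (hpr (Fin.last n)))]
    rfl

end VacuumExpectation

/-- the normalized `q`-deformed `gl_{ℓ+1}`-Whittaker function `Ψ̃_z(p)` as a
matrix element `⟨v₋| ∏_{k=1}^{ℓ+1} f_{ℓ+1,k}^{p_k - p_{k+1}} |v₊⟩` over a quantum torus
algebra. -/
theorem whittaker_matrix_element {K : Type*} [Field K] (q : K)
    (hq : ∀ n : ℕ, 1 ≤ n → q ^ n ≠ 1) (ℓ : ℕ) (hℓ : 1 ≤ ℓ)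
    (z : ℕ → K) (hz : ∀ k, 1 ≤ k → k ≤ ℓ + 1 → z k ≠ 0)
    (A : Type*) [Ring A] [Algebra K A] (X T : ℕ → ℕ → A)
    (hXX : ∀ k i m j, 1 ≤ k → k ≤ ℓ → 1 ≤ i → i ≤ k → 1 ≤ m → m ≤ ℓ → 1 ≤ j → j ≤ m →
      X k i * X m j = X m j * X k i)
    (hTT : ∀ k i m j, 1 ≤ k → k ≤ ℓ → 1 ≤ i → i ≤ k → 1 ≤ m → m ≤ ℓ → 1 ≤ j → j ≤ m →
      T k i * T m j = T m j * T k i)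
    (hTX : ∀ k i m j, 1 ≤ k → k ≤ ℓ → 1 ≤ i → i ≤ k → 1 ≤ m → m ≤ ℓ → 1 ≤ j → j ≤ m →
      T k i * X m j =
        (if k = m ∧ i = j then q • (X m j * T k i) else X m j * T k i))
    (V : Type*) [AddCommGroup V] [Module A V]
    (vp : V) (hvp : ∀ k i, 1 ≤ k → k ≤ ℓ → 1 ≤ i → i ≤ k → T k i • vp = vp)
    (φ : V → K)
    (hadd : ∀ v w, φ (v + w) = φ v + φ w)
    (hsmul : ∀ (c : K) (v : V), φ ((algebraMap K A c) • v) = c * φ v)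
    (hφX : ∀ (w : V) k i, 1 ≤ k → k ≤ ℓ → 1 ≤ i → i ≤ k → φ (X k i • w) = φ w)
    (hφv : φ vp = 1)
    (p : Fin (ℓ + 1) → ℤ) (hp : ∀ k : Fin ℓ, p k.succ ≤ p k.castSucc)
    (hp0 : 0 ≤ p (Fin.last ℓ)) :
    φ (((List.range (ℓ + 1)).map (fun k =>
        qtorF z X T (ℓ + 1) (k + 1) ^
          (((if h : k < ℓ + 1 then p ⟨k, h⟩ else 0) -
            (if h : k + 1 < ℓ + 1 then p ⟨k + 1, h⟩ else 0)).toNat))).prod • vp)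
      = nwhit q ℓ (fun i => z ((i : ℕ) + 1)) p := by
  have torus : IsQuantumTorus q ℓ X T :=
    { commute_X := fun ⟨hi, hik, hk⟩ ⟨hj, hjm, hm⟩ =>
        hXX _ _ _ _ (hi.trans hik) hk hi hik (hj.trans hjm) hm hj hjm
      commute_T := fun ⟨hi, hik, hk⟩ ⟨hj, hjm, hm⟩ =>
        hTT _ _ _ _ (hi.trans hik) hk hi hik (hj.trans hjm) hm hj hjm
      commute_T_X := fun ⟨hi, hik, hk⟩ ⟨hj, hjm, hm⟩ hne =>
        (hTX _ _ _ _ (hi.trans hik) hk hi hik (hj.trans hjm) hm hj hjm).trans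
          (if_neg fun h => hne (Prod.ext h.1 h.2))
      T_mul_X := fun ⟨hi, hik, hk⟩ =>
        (hTX _ _ _ _ (hi.trans hik) hk hi hik (hi.trans hik) hk hi hik).trans
          (if_pos ⟨rfl, rfl⟩) }
  let F : A →ₗ[K] K :=
    { toFun := fun a => φ (a • vp)
      map_add' := fun a b => by rw [add_smul, hadd]
      map_smul' := fun c a => by rw [Algebra.smul_def, mul_smul, hsmul]; rfl }
  have vacuum : IsVacuumFunctional ℓ X T F :=
    { X_mul := fun ⟨hi, hik, hk⟩ a =>
        (congrArg φ (mul_smul _ a vp)).trans (hφX _ _ _ (hi.trans hik) hk hi hik)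
      mul_T := fun ⟨hi, hik, hk⟩ a => congrArg φ
        ((mul_smul a _ vp).trans (congrArg (a • ·) (hvp _ _ (hi.trans hik) hk hi hik)))
      map_one := (congrArg φ (one_smul A vp)).trans hφv }
  exact vacuum_prod_qtorF_eq_nwhit hq z torus vacuum le_rfl hp hp0
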